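/- Let Ḡ be graded antisymmetric with the Lie algebra relations, and suppose K₁₂(Ḡ₁ + Ḡ₂) = 0 = (Ḡ₁ + Ḡ₂)K₁₂. Then K₁₂(Ḡ₁² + βḠ₁) = K₁₂(Ḡ₂² + βḠ₂) and (Ḡ₁² + βḠ₁)K₁₂ = (Ḡ₂² + βḠ₂)K₁₂, where β = n/2 − ϵ. -/

import Mathlib

open Matrix BigOperators

noncomputable section

/-- The flip (permutation) operator `P` on the tensor square. -/
def Pm (A : Type*) [Ring A] (n : ℕ) : Matrix (Fin n × Fin n) (Fin n × Fin n) A :=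
  fun p q => if p.1 = q.2 ∧ p.2 = q.1 then 1 else 0

/-- The rank-one invariant operator `K^{a₁a₂}_{b₁b₂} = ε^{a₁a₂} ε_{b₁b₂}`. -/
def Km (A : Type*) [Ring A] [Algebra ℂ A] {n : ℕ}
    (ε εInv : Matrix (Fin n) (Fin n) ℂ) :
    Matrix (Fin n × Fin n) (Fin n × Fin n) A :=
  fun p q => algebraMap ℂ A (εInv p.1 p.2 * ε q.1 q.2)

/-- `M₁ = M ⊗ I`, acting on the first tensor factor. -/
def T1 {n : ℕ} {A : Type*} [Ring A] (M : Matrix (Fin n) (Fin n) A) :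
    Matrix (Fin n × Fin n) (Fin n × Fin n) A :=
  fun p q => if p.2 = q.2 then M p.1 q.1 else 0

/-- `M₂ = I ⊗ M`, acting on the second tensor factor. -/
def T2 {n : ℕ} {A : Type*} [Ring A] (M : Matrix (Fin n) (Fin n) A) :
    Matrix (Fin n × Fin n) (Fin n × Fin n) A :=
  fun p q => if p.1 = q.1 then M p.2 q.2 else 0

/-- Index lowering with the form ε: `M_{ab} = ε_{ac} M^c_b`. -/
def lowIx {n : ℕ} {A : Type*} [Ring A] [Algebra ℂ A]
    (ε : Matrix (Fin n) (Fin n) ℂ) (M : Matrix (Fin n) (Fin n) A) :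
    Matrix (Fin n) (Fin n) A :=
  fun a b => ∑ c, ε a c • M c b

/-- The fundamental R matrix `R(u) = u(u+β) I + (u+β) P − ϵ u K`. -/
def Rm (A : Type*) [Ring A] [Algebra ℂ A] {n : ℕ}
    (ε εInv : Matrix (Fin n) (Fin n) ℂ) (ϵ β u : ℂ) :
    Matrix (Fin n × Fin n) (Fin n × Fin n) A :=
  (u * (u + β)) • (1 : Matrix (Fin n × Fin n) (Fin n × Fin n) A)
    + (u + β) • Pm A n + (-(ϵ * u)) • Km A ε εInv

/-- The so(n)/sp(n) Lie algebra relations for a lowered-index matrix of generators. -/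
def LieRel {n : ℕ} {A : Type*} [Ring A] [Algebra ℂ A]
    (ε : Matrix (Fin n) (Fin n) ℂ) (Gl : Matrix (Fin n) (Fin n) A) : Prop :=
  ∀ a b c d, Gl a b * Gl c d - Gl c d * Gl a b =
    -(ε c b • Gl a d) + ε a d • Gl c b + ε a c • Gl b d - ε d b • Gl c a

/-- Graded antisymmetry: `M_{ab} = −ϵ M_{ba}`. -/
def GAnti {n : ℕ} {A : Type*} [Ring A] [Algebra ℂ A]
    (ϵ : ℂ) (Gl : Matrix (Fin n) (Fin n) A) : Prop :=
  ∀ a b, Gl a b = -(ϵ • Gl b a)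

/-- Graded antisymmetrization over all four indices of the product
`Gl_{[a b} Gl_{c d)}`: antisymmetrization for ϵ = 1, symmetrization for ϵ = −1. -/
def gradedW {n : ℕ} {A : Type*} [Ring A] [Algebra ℂ A]
    (ϵ : ℂ) (Gl : Matrix (Fin n) (Fin n) A) (a b c d : Fin n) : A :=
  ∑ σ : Equiv.Perm (Fin 4),
    (if Equiv.Perm.sign σ = 1 then (1 : ℂ) else -ϵ) •
      (Gl (![a,b,c,d] (σ 0)) (![a,b,c,d] (σ 1)) *
       Gl (![a,b,c,d] (σ 2)) (![a,b,c,d] (σ 3)))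

theorem abs13 {R : Type*} [Ring R] [Algebra ℂ R] (ϵ β m : ℂ) (hϵ : ϵ * ϵ = 1)
    (hβ : 2 * β = m - 2 * ϵ) (K P X Y : R)
    (hKP : K * P = ϵ • K) (hPK : P * K = ϵ • K) (hKK : K * K = (ϵ * m) • K)
    (hYP : Y * P = P * X) (hPY : P * Y = X * P)
    (hL : (X + P - ϵ • K) * Y = Y * (X + P - ϵ • K))
    (hKL : K * (X + Y) = 0) (hKR : (X + Y) * K = 0) :
    K * (X * X + β • X) = K * (Y * Y + β • Y) ∧
    (X * X + β • X) * K = (Y * Y + β • Y) * K := by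
  have h1 : K * X = -(K * Y) := by rw [mul_add] at hKL; exact eq_neg_of_add_eq_zero_left hKL
  have h2 : X * K = -(Y * K) := by rw [add_mul] at hKR; exact eq_neg_of_add_eq_zero_left hKR
  have hc : X * Y = Y * X + Y * P - ϵ • (Y * K) - P * Y + ϵ • (K * Y) := by
    simp only [add_mul, sub_mul, mul_add, mul_sub, smul_mul_assoc, mul_smul_comm] at hL
    rw [← hL]; abel
  have h0 : K * Y * K = 0 := by
    have e1 : K * Y * P * K = ϵ • (K * Y * K) := by
      rw [mul_assoc (K * Y), hPK, mul_smul_comm]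
    have e2 : K * Y * P * K = -(ϵ • (K * Y * K)) := by
      rw [mul_assoc K Y P, hYP, ← mul_assoc K P X, hKP, smul_mul_assoc, smul_mul_assoc, h1,
        neg_mul, smul_neg]
    have e3 : (2 * ϵ) • (K * Y * K) = 0 := by
      rw [mul_smul, two_smul]
      nth_rewrite 1 [← e1]
      rw [e2]; abel
    have hne : (2 * ϵ) ≠ 0 := by
      intro h
      have : ϵ = 0 := by simpa using h
      simp [this] at hϵ
    have := congrArg (fun z => (2 * ϵ)⁻¹ • z) e3
    simpa only [smul_smul, inv_mul_cancel₀ hne, one_smul, smul_zero] using this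
  have hm : m = 2 * β + 2 * ϵ := by rw [hβ]; ring
  constructor
  · have e1 : K * (X * X) = -(K * (Y * X)) := by
      rw [← mul_assoc, h1, neg_mul, mul_assoc]
    have e2 : K * (Y * Y) = -(K * (X * Y)) := by
      rw [← mul_assoc, ← mul_assoc, h1, neg_mul, neg_neg]
    have a1 : K * (Y * P) = -(ϵ • (K * Y)) := by
      rw [hYP, ← mul_assoc, hKP, smul_mul_assoc, h1, smul_neg]
    have a2 : K * (P * Y) = ϵ • (K * Y) := by
      rw [← mul_assoc, hKP, smul_mul_assoc]
    have a3 : K * (K * Y) = (ϵ * m) • (K * Y) := by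
      rw [← mul_assoc, hKK, smul_mul_assoc]
    have a4 : K * (Y * K) = 0 := by rw [← mul_assoc, h0]
    rw [mul_add, mul_add, e1, e2, hc]
    simp only [mul_add, mul_sub, mul_smul_comm, a1, a2, a3, a4, h1, smul_smul, ← mul_assoc ϵ ϵ,
      hϵ, one_mul, hm]
    module
  · have e1 : X * X * K = -(X * Y * K) := by
      rw [mul_assoc, h2, mul_neg, mul_assoc]
    have e2 : Y * Y * K = -(Y * X * K) := by
      rw [mul_assoc, mul_assoc, h2, mul_neg, neg_neg]
    have a1 : P * Y * K = -(ϵ • (Y * K)) := by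
      rw [hPY, mul_assoc, hPK, mul_smul_comm, h2, smul_neg]
    have a2 : Y * P * K = ϵ • (Y * K) := by
      rw [mul_assoc, hPK, mul_smul_comm]
    have a3 : Y * K * K = (ϵ * m) • (Y * K) := by
      rw [mul_assoc, hKK, mul_smul_comm]
    rw [add_mul, add_mul, e1, e2, hc]
    simp only [add_mul, sub_mul, smul_mul_assoc, a1, a2, a3, h0, h2, smul_smul, ← mul_assoc ϵ ϵ,
      hϵ, one_mul, hm]
    module

theorem stmt13 (n : ℕ) (ϵ β : ℂ) (hϵ : ϵ = 1 ∨ ϵ = -1)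
    (hβ : β = (n : ℂ) / 2 - ϵ)
    (ε εInv : Matrix (Fin n) (Fin n) ℂ)
    (hsym : ∀ a b, ε a b = ϵ * ε b a)
    (hinv : ε * εInv = 1) (hinv' : εInv * ε = 1)
    (A : Type*) [Ring A] [Algebra ℂ A]
    (G : Matrix (Fin n) (Fin n) A)
    (hanti : GAnti ϵ (lowIx ε G))
    (hLieT : (T1 G + Pm A n - ϵ • Km A ε εInv) * T2 G =
             T2 G * (T1 G + Pm A n - ϵ • Km A ε εInv))
    (hKL : Km A ε εInv * (T1 G + T2 G) = 0)
    (hKR : (T1 G + T2 G) * Km A ε εInv = 0) :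
    Km A ε εInv * (T1 G * T1 G + β • T1 G) =
      Km A ε εInv * (T2 G * T2 G + β • T2 G) ∧
    (T1 G * T1 G + β • T1 G) * Km A ε εInv =
      (T2 G * T2 G + β • T2 G) * Km A ε εInv := by
  have hϵ2 : ϵ * ϵ = 1 := by rcases hϵ with h | h <;> simp [h]
  have hsymI : ∀ a b, εInv a b = ϵ * εInv b a := by
    have hT : εᵀ = ϵ • ε := by
      ext a b
      simp only [Matrix.transpose_apply, Matrix.smul_apply, smul_eq_mul]
      exact hsym b a
    have h1 : εInvᵀ * (ϵ • ε) = 1 := by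
      rw [← hT, ← Matrix.transpose_mul, hinv, Matrix.transpose_one]
    have h2 : ϵ • εInvᵀ = εInv := by
      calc ϵ • εInvᵀ = (ϵ • εInvᵀ) * (ε * εInv) := by rw [hinv, mul_one]
        _ = (εInvᵀ * (ϵ • ε)) * εInv := by
          rw [← mul_assoc, smul_mul_assoc, mul_smul_comm]
        _ = εInv := by rw [h1, one_mul]
    intro a b
    have := congrFun (congrFun h2 a) b
    simpa using this.symm
  refine abs13 ϵ β (n : ℂ) hϵ2 (by rw [hβ]; ring) (Km A ε εInv) (Pm A n) (T1 G) (T2 G)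
    ?_ ?_ ?_ ?_ ?_ hLieT hKL hKR
  · ext ⟨a, b⟩ ⟨c, d⟩
    simp only [Matrix.mul_apply, Matrix.smul_apply, Km, Pm, Fintype.sum_prod_type, mul_ite,
      mul_one, mul_zero, ite_and, Finset.sum_ite_eq', Finset.sum_ite_eq, Finset.mem_univ, if_true,
      Finset.sum_ite_irrel, Finset.sum_const_zero]
    rw [hsym d c, Algebra.smul_def, ← map_mul]
    congr 1; ring
  · ext ⟨a, b⟩ ⟨c, d⟩
    have : ∀ x y : Fin n, ((a = y ∧ b = x) ↔ (x = b ∧ y = a)) := by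
      intro x y; constructor <;> rintro ⟨rfl, rfl⟩ <;> simp
    simp only [Matrix.mul_apply, Matrix.smul_apply, Km, Pm, Fintype.sum_prod_type, ite_mul, this,
      one_mul, zero_mul, ite_and, Finset.sum_ite_eq', Finset.sum_ite_eq, Finset.mem_univ, if_true,
      Finset.sum_ite_irrel, Finset.sum_const_zero]
    rw [hsymI b a, Algebra.smul_def, ← map_mul]
    congr 1; ring
  · have hs : ∑ x, ∑ y, ε x y * εInv x y = ϵ * n := by
      have h : ∀ x, ∑ y, ε x y * εInv x y = ϵ := by
        intro x
        have h := congrFun (congrFun hinv x) x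
        rw [Matrix.mul_apply, Matrix.one_apply_eq] at h
        calc ∑ y, ε x y * εInv x y = ∑ y, ϵ * (ε x y * εInv y x) :=
              Finset.sum_congr rfl fun y _ => by rw [hsymI x y]; ring
          _ = ϵ := by rw [← Finset.mul_sum, h, mul_one]
      simp [h, mul_comm]
    ext ⟨a, b⟩ ⟨c, d⟩
    simp only [Matrix.mul_apply, Matrix.smul_apply, Km, Fintype.sum_prod_type]
    rw [Algebra.smul_def]
    simp only [← map_mul, ← map_sum]
    congr 1
    rw [← hs, Finset.sum_mul]
    refine Finset.sum_congr rfl fun x _ => ?_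
    rw [Finset.sum_mul]
    refine Finset.sum_congr rfl fun y _ => ?_
    ring
  · ext ⟨a, b⟩ ⟨c, d⟩
    simp only [Matrix.mul_apply, Pm, T1, T2, Fintype.sum_prod_type]
    rw [Finset.sum_eq_single d (by intro x _ hx; simp [hx]) (by simp),
      Finset.sum_eq_single c (by intro x _ hx; simp [hx]) (by simp),
      Finset.sum_eq_single b (by intro x _ hx; simp [hx.symm]) (by simp),
      Finset.sum_eq_single a (by intro x _ hx; simp [hx.symm]) (by simp)]
    simp
  · ext ⟨a, b⟩ ⟨c, d⟩
    simp only [Matrix.mul_apply, Pm, T1, T2, Fintype.sum_prod_type]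
    rw [Finset.sum_eq_single b (by intro x _ hx; simp [hx.symm]) (by simp),
      Finset.sum_eq_single a (by intro x _ hx; simp [hx.symm]) (by simp),
      Finset.sum_eq_single d (by intro x _ hx; simp [hx]) (by simp),
      Finset.sum_eq_single c (by intro x _ hx; simp [hx]) (by simp)]
    simp
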